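/- For every complex number q with 0 < |q| < 1, the cubic theta function c(q) = 3 (q^3; q^3)_∞^3 / (q; q)_∞ satisfies q / c(q) = − q^2 c(q^4)^2 / c(q^2)^3 + 3 q (q^4; q^4)_∞^2 (q^{12}; q^{12})_∞^2 / ( c(q^2)^2 (q^2; q^2)_∞ (q^6; q^6)_∞ ). -/

import Mathlib

/-- The q-shifted factorial `(a; q)_∞ = ∏_{n=0}^∞ (1 - a qⁿ)`. -/
noncomputable def qPoch (a q : ℂ) : ℂ := ∏' n : ℕ, (1 - a * q ^ n)

/-- The cubic theta function `c(q) = 3 (q³; q³)_∞³ / (q; q)_∞`. -/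
noncomputable def c (q : ℂ) : ℂ := 3 * qPoch (q ^ 3) (q ^ 3) ^ 3 / qPoch q q

/-- Finite q-shifted factorial. -/
noncomputable def fq (a q : ℂ) (n : ℕ) : ℂ := ∏ i ∈ Finset.range n, (1 - a * q ^ i)

lemma summ_aux (a q : ℂ) (hq : ‖q‖ < 1) : Summable fun n : ℕ => ‖-(a * q ^ n)‖ := by
  simp only [norm_neg, norm_mul, norm_pow]
  exact (summable_geometric_of_lt_one (norm_nonneg _) hq).mul_left _

lemma fq_tendsto (a q : ℂ) (hq : ‖q‖ < 1) :
    Filter.Tendsto (fq a q) Filter.atTop (nhds (qPoch a q)) := by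
  have h := (multipliable_one_add_of_summable (summ_aux a q hq)).tendsto_prod_tprod_nat
  simp only [← sub_eq_add_neg] at h
  exact h

lemma qPoch_ne (a q : ℂ) (hq : ‖q‖ < 1) (h : ∀ n : ℕ, 1 - a * q ^ n ≠ 0) : qPoch a q ≠ 0 := by
  have := tprod_one_add_ne_zero_of_summable (f := fun n : ℕ => -(a * q ^ n))
    (by simpa only [← sub_eq_add_neg] using h) (summ_aux a q hq)
  simp only [← sub_eq_add_neg] at this
  exact this

lemma qPoch_ne' (a q : ℂ) (hq : ‖q‖ < 1) (ha : ‖a‖ < 1) : qPoch a q ≠ 0 := by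
  refine qPoch_ne a q hq fun n h => ?_
  have h1 : a * q ^ n = 1 := (sub_eq_zero.1 h).symm
  have h2 : ‖a‖ * ‖q‖ ^ n = 1 := by rw [← norm_pow, ← norm_mul, h1, norm_one]
  have h3 : ‖q‖ ^ n ≤ 1 := pow_le_one₀ (norm_nonneg _) hq.le
  nlinarith [norm_nonneg a, norm_nonneg (q ^ n)]

lemma qPoch_one (q : ℂ) (hq : ‖q‖ < 1) : qPoch 1 q = 0 := by
  refine tendsto_nhds_unique (fq_tendsto 1 q hq) (tendsto_const_nhds.congr' ?_)
  filter_upwards [Filter.eventually_ge_atTop 1] with n hn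
  refine (Finset.prod_eq_zero (i := 0) (by simp; omega) (by simp)).symm

lemma norm_pow_lt (q : ℂ) (hq : ‖q‖ < 1) (k : ℕ) (hk : k ≠ 0) : ‖q ^ k‖ < 1 := by
  rw [norm_pow]; exact pow_lt_one₀ (norm_nonneg _) hq hk

lemma qPoch_two (a q : ℂ) (hq : ‖q‖ < 1) :
    qPoch a q = qPoch a (q ^ 2) * qPoch (a * q) (q ^ 2) := by
  have h2 := norm_pow_lt q hq 2 (by norm_num)
  have hl : Filter.Tendsto (fun n : ℕ => 2 * n) Filter.atTop Filter.atTop :=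
    Filter.tendsto_atTop_mono (fun n => by simp only [id]; omega) Filter.tendsto_id
  refine tendsto_nhds_unique ((fq_tendsto a q hq).comp hl)
    (((fq_tendsto a _ h2).mul (fq_tendsto (a * q) _ h2)).congr fun n => ?_)
  simp only [Function.comp, fq]
  induction n with
  | zero => simp
  | succ n ih =>
    rw [show 2 * (n + 1) = 2 * n + 1 + 1 by ring]
    simp only [Finset.prod_range_succ]
    rw [← ih]; ring

lemma qPoch_three (a q : ℂ) (hq : ‖q‖ < 1) :
    qPoch a q = qPoch a (q ^ 3) * qPoch (a * q) (q ^ 3) * qPoch (a * q ^ 2) (q ^ 3) := by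
  have h2 := norm_pow_lt q hq 3 (by norm_num)
  have hl : Filter.Tendsto (fun n : ℕ => 3 * n) Filter.atTop Filter.atTop :=
    Filter.tendsto_atTop_mono (fun n => by simp only [id]; omega) Filter.tendsto_id
  refine tendsto_nhds_unique ((fq_tendsto a q hq).comp hl)
    ((((fq_tendsto a _ h2).mul (fq_tendsto (a * q) _ h2)).mul
      (fq_tendsto (a * q ^ 2) _ h2)).congr fun n => ?_)
  simp only [Function.comp, fq]
  induction n with
  | zero => simp
  | succ n ih =>
    rw [show 3 * (n + 1) = 3 * n + 1 + 1 + 1 by ring]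
    simp only [Finset.prod_range_succ]
    rw [← ih]; ring

lemma qPoch_sq (a q : ℂ) (hq : ‖q‖ < 1) :
    qPoch a q * qPoch (-a) q = qPoch (a ^ 2) (q ^ 2) := by
  have h2 := norm_pow_lt q hq 2 (by norm_num)
  refine tendsto_nhds_unique ((fq_tendsto a q hq).mul (fq_tendsto (-a) q hq))
    ((fq_tendsto (a ^ 2) _ h2).congr fun n => ?_)
  simp only [fq]
  rw [← Finset.prod_mul_distrib]
  exact Finset.prod_congr rfl fun i _ => by ring

lemma fq_ne (p : ℂ) (hp : ∀ k : ℕ, k ≠ 0 → p ^ k ≠ 1) (n : ℕ) : fq p p n ≠ 0 := by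
  refine Finset.prod_ne_zero_iff.2 fun i _ h => hp (i + 1) (by omega) ?_
  rw [pow_succ']; exact (sub_eq_zero.1 h).symm

lemma weight_aux (p x : ℂ) (hp0 : p ≠ 0) (hp : ∀ k : ℕ, k ≠ 0 → p ^ k ≠ 1) (hx : x ≠ 0)
    (i j : ℕ) :
    Lagrange.nodalWeight (Finset.range (i + j + 1)) (fun m : ℕ => p ^ m) i *
      ∏ m ∈ Finset.range (i + j), (p ^ i - x * p ^ m) =
    x ^ i * (fq (p / x) p i / fq p p i) * (fq x p j / fq p p j) := by
  have hden : ∏ m ∈ (Finset.range (i + j + 1)).erase i, (p ^ i - p ^ m) =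
      (∏ m ∈ Finset.range i, (p ^ i - p ^ m)) * ∏ k ∈ Finset.range j, (p ^ i - p ^ (i + 1 + k)) := by
    have h1 : ∏ m ∈ (Finset.range (i + j + 1)).erase i, (p ^ i - p ^ m) =
        ∏ m ∈ (Finset.range (i + j + 1)).erase i, (if m = i then 1 else p ^ i - p ^ m) := by
      refine Finset.prod_congr rfl fun m hm => ?_
      rw [if_neg (Finset.ne_of_mem_erase hm)]
    rw [h1, Finset.prod_erase _ (by simp), show i + j + 1 = i + 1 + j by ring,
      Finset.prod_range_add, Finset.prod_range_succ]
    simp only [if_true, mul_one]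
    congr 1
    · refine Finset.prod_congr rfl fun m hm => ?_
      rw [if_neg (by have := Finset.mem_range.1 hm; omega)]
    · refine Finset.prod_congr rfl fun m hm => ?_
      rw [if_neg (by omega)]
  have e1 : ∏ k ∈ Finset.range j, (p ^ i - p ^ (i + 1 + k)) = (p ^ i) ^ j * fq p p j := by
    have : ∀ k ∈ Finset.range j, p ^ i - p ^ (i + 1 + k) = p ^ i * (1 - p * p ^ k) := by
      intro k _; ring
    rw [Finset.prod_congr rfl this, Finset.prod_mul_distrib]; simp [fq]
  have e2 : ∏ k ∈ Finset.range j, (p ^ i - x * p ^ (i + k)) = (p ^ i) ^ j * fq x p j := by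
    have : ∀ k ∈ Finset.range j, p ^ i - x * p ^ (i + k) = p ^ i * (1 - x * p ^ k) := by
      intro k _; ring
    rw [Finset.prod_congr rfl this, Finset.prod_mul_distrib]; simp [fq]
  have e3 : ∏ m ∈ Finset.range i, (p ^ i - p ^ m) =
      (∏ m ∈ Finset.range i, (-p ^ m)) * fq p p i := by
    have : fq p p i = ∏ m ∈ Finset.range i, (1 - p * p ^ (i - 1 - m)) :=
      (Finset.prod_range_reflect _ _).symm
    rw [this, ← Finset.prod_mul_distrib]
    refine Finset.prod_congr rfl fun m hm => ?_
    obtain ⟨d, rfl⟩ : ∃ d, i = m + 1 + d := ⟨i - m - 1, by have := Finset.mem_range.1 hm; omega⟩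
    rw [show m + 1 + d - 1 - m = d by omega]; ring
  have e4 : ∏ m ∈ Finset.range i, (p ^ i - x * p ^ m) =
      (∏ m ∈ Finset.range i, (-p ^ m)) * x ^ i * fq (p / x) p i := by
    have : fq (p / x) p i = ∏ m ∈ Finset.range i, (1 - p / x * p ^ (i - 1 - m)) :=
      (Finset.prod_range_reflect _ _).symm
    have h2 : x ^ i = ∏ m ∈ Finset.range i, x := by simp
    rw [this, h2, ← Finset.prod_mul_distrib, ← Finset.prod_mul_distrib]
    refine Finset.prod_congr rfl fun m hm => ?_
    obtain ⟨d, rfl⟩ : ∃ d, i = m + 1 + d := ⟨i - m - 1, by have := Finset.mem_range.1 hm; omega⟩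
    rw [show m + 1 + d - 1 - m = d by omega]; field_simp; ring
  have hP : ∏ m ∈ Finset.range i, (-p ^ m) ≠ 0 :=
    Finset.prod_ne_zero_iff.2 fun m _ => neg_ne_zero.2 (pow_ne_zero _ hp0)
  have hi := fq_ne p hp i
  have hj := fq_ne p hp j
  have hpij : (p ^ i) ^ j ≠ 0 := pow_ne_zero _ (pow_ne_zero _ hp0)
  rw [Lagrange.nodalWeight, Finset.prod_inv_distrib, hden, Finset.prod_range_add, e1, e2, e3, e4]
  field_simp

lemma finite_kron (p x b : ℂ) (hp0 : p ≠ 0) (hp : ∀ k : ℕ, k ≠ 0 → p ^ k ≠ 1) (hx : x ≠ 0)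
    (hb0 : b ≠ 0) (M : ℕ) (hb : ∀ i : ℕ, 1 - b * p ^ i ≠ 0) :
    fq (b * x) p M / fq b p (M + 1) = ∑ i ∈ Finset.range (M + 1),
      x ^ i * (fq (p / x) p i / fq p p i) * (fq x p (M - i) / fq p p (M - i)) / (1 - b * p ^ i) := by
  have hinj : Set.InjOn (fun m : ℕ => p ^ m) (Finset.range (M + 1) : Set ℕ) := by
    have key : ∀ m n : ℕ, m < n → p ^ m ≠ p ^ n := by
      intro m n hmn h
      obtain ⟨d, rfl⟩ := Nat.exists_eq_add_of_lt hmn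
      refine hp (d + 1) (by omega) ?_
      have : p ^ m * p ^ (d + 1) = p ^ m * 1 := by rw [mul_one, ← pow_add]; exact h.symm
      exact mul_left_cancel₀ (pow_ne_zero _ hp0) this
    intro m _ n _ h
    rcases lt_trichotomy m n with h1 | h1 | h1
    · exact absurd h (key _ _ h1)
    · exact h1
    · exact absurd h.symm (key _ _ h1)
  have hy : ∀ i ∈ Finset.range (M + 1), b⁻¹ ≠ p ^ i := by
    intro i _ h
    exact hb i (by rw [← h, mul_inv_cancel₀ hb0, sub_self])
  let f : Polynomial ℂ := ∏ m ∈ Finset.range M, (Polynomial.X - Polynomial.C (x * p ^ m))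
  have hf : ∀ y, f.eval y = ∏ m ∈ Finset.range M, (y - x * p ^ m) := by
    intro y; simp [f, Polynomial.eval_prod]
  have hdeg : f.degree < (Finset.range (M + 1)).card := by
    have : f.degree = M := by simp only [f, Polynomial.degree_prod, Polynomial.degree_X_sub_C]; simp
    rw [this, Finset.card_range]; exact_mod_cast Nat.lt_succ_self M
  have h1 := Lagrange.eq_interpolate_of_eval_eq (fun i => f.eval (p ^ i)) hinj hdeg (fun i _ => rfl)
  have h2 := Lagrange.eval_interpolate_not_at_node (v := fun m : ℕ => p ^ m)
    (fun i => f.eval (p ^ i)) hy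
  rw [← h1, Lagrange.eval_nodal, hf] at h2
  have e1 : fq (b * x) p M = b ^ M * ∏ m ∈ Finset.range M, (b⁻¹ - x * p ^ m) := by
    have : b ^ M = ∏ m ∈ Finset.range M, b := by simp
    rw [this, ← Finset.prod_mul_distrib]
    exact Finset.prod_congr rfl fun m _ => by field_simp
  have e2 : fq b p (M + 1) = b ^ (M + 1) * ∏ m ∈ Finset.range (M + 1), (b⁻¹ - p ^ m) := by
    have : b ^ (M + 1) = ∏ m ∈ Finset.range (M + 1), b := by simp
    rw [this, ← Finset.prod_mul_distrib]
    exact Finset.prod_congr rfl fun m _ => by field_simp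
  have hnod : ∏ m ∈ Finset.range (M + 1), (b⁻¹ - p ^ m) ≠ 0 :=
    Finset.prod_ne_zero_iff.2 fun m hm => sub_ne_zero.2 (hy m hm)
  have e3 : fq (b * x) p M / fq b p (M + 1) = b⁻¹ * ∑ i ∈ Finset.range (M + 1),
      Lagrange.nodalWeight (Finset.range (M + 1)) (fun m : ℕ => p ^ m) i * (b⁻¹ - p ^ i)⁻¹ *
        f.eval (p ^ i) := by
    rw [e1, e2, h2]
    generalize (∏ m ∈ Finset.range (M + 1), (b⁻¹ - p ^ m)) = A at hnod ⊢
    generalize (∑ i ∈ Finset.range (M + 1),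
      Lagrange.nodalWeight (Finset.range (M + 1)) (fun m : ℕ => p ^ m) i * (b⁻¹ - p ^ i)⁻¹ *
        f.eval (p ^ i)) = S
    field_simp
    ring
  rw [e3, Finset.mul_sum]
  refine Finset.sum_congr rfl fun i hi => ?_
  obtain ⟨j, rfl⟩ : ∃ j, M = i + j := ⟨M - i, by have := Finset.mem_range.1 hi; omega⟩
  rw [show i + j - i = j by omega, ← weight_aux p x hp0 hp hx i j, hf]
  have h3 : b⁻¹ * (b⁻¹ - p ^ i)⁻¹ = (1 - b * p ^ i)⁻¹ := by
    rw [← mul_inv, mul_sub, mul_inv_cancel₀ hb0]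
  rw [div_eq_mul_inv, ← h3]; ring

lemma fq_add (a p : ℂ) (n m : ℕ) : fq a p (n + m) = fq a p n * fq (a * p ^ n) p m := by
  simp only [fq, Finset.prod_range_add]
  congr 1
  exact Finset.prod_congr rfl fun i _ => by ring

lemma fq_shift (a p : ℂ) (hp0 : p ≠ 0) (ha : a ≠ 0) (N : ℕ) :
    fq (a * (p ^ N)⁻¹) p N =
      a ^ N * (∏ k ∈ Finset.range N, (-(p ^ (k + 1))⁻¹)) * fq (p / a) p N := by
  have h1 : fq (a * (p ^ N)⁻¹) p N =
      ∏ k ∈ Finset.range N, (1 - a * (p ^ N)⁻¹ * p ^ (N - 1 - k)) :=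
    (Finset.prod_range_reflect _ _).symm
  have h2 : a ^ N = ∏ k ∈ Finset.range N, a := by simp
  rw [h1, h2, fq, ← Finset.prod_mul_distrib, ← Finset.prod_mul_distrib]
  refine Finset.prod_congr rfl fun m hm => ?_
  obtain ⟨d, rfl⟩ : ∃ d, N = m + 1 + d := ⟨N - m - 1, by have := Finset.mem_range.1 hm; omega⟩
  rw [show m + 1 + d - 1 - m = d by omega]; field_simp; ring

lemma finite_kron' (p x a : ℂ) (hp0 : p ≠ 0) (hp : ∀ k : ℕ, k ≠ 0 → p ^ k ≠ 1) (hx : x ≠ 0)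
    (ha0 : a ≠ 0) (N : ℕ) (ha : ∀ n : ℤ, 1 - a * p ^ n ≠ 0) :
    fq (a * x) p N * fq (p / (a * x)) p N / (fq a p (N + 1) * fq (p / a) p N) =
    ∑ n ∈ Finset.Icc (-N : ℤ) N,
      x ^ n / (1 - a * p ^ n) *
        ((fq (p / x) p (N + n).toNat / fq p p (N + n).toNat) *
          (fq x p (N - n).toNat / fq p p (N - n).toNat)) := by
  have hb : ∀ i : ℕ, 1 - a * (p ^ N)⁻¹ * p ^ i ≠ 0 := by
    intro i
    have := ha (i - N)
    rwa [zpow_sub₀ hp0, zpow_natCast, zpow_natCast, div_eq_inv_mul, ← mul_assoc] at this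
  have h := finite_kron p x (a * (p ^ N)⁻¹) hp0 hp hx
    (mul_ne_zero ha0 (inv_ne_zero (pow_ne_zero _ hp0))) (N + N) hb
  rw [show a * (p ^ N)⁻¹ * x = a * x * (p ^ N)⁻¹ by ring, fq_add, add_assoc, fq_add _ _ N (N + 1),
    fq_shift _ _ hp0 (mul_ne_zero ha0 hx), fq_shift _ _ hp0 ha0,
    inv_mul_cancel_right₀ (pow_ne_zero _ hp0), inv_mul_cancel_right₀ (pow_ne_zero _ hp0)] at h
  have hG : (∏ k ∈ Finset.range N, (-(p ^ (k + 1))⁻¹)) ≠ 0 :=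
    Finset.prod_ne_zero_iff.2 fun m _ => neg_ne_zero.2 (inv_ne_zero (pow_ne_zero _ hp0))
  have haN : a ^ N ≠ 0 := pow_ne_zero _ ha0
  have hxN : x ^ N ≠ 0 := pow_ne_zero _ hx
  have h1 : fq (a * x) p N * fq (p / (a * x)) p N / (fq a p (N + 1) * fq (p / a) p N) =
      (x ^ N)⁻¹ * ((a * x) ^ N * (∏ k ∈ Finset.range N, (-(p ^ (k + 1))⁻¹)) *
        fq (p / (a * x)) p N * fq (a * x) p N /
        (a ^ N * (∏ k ∈ Finset.range N, (-(p ^ (k + 1))⁻¹)) * fq (p / a) p N * fq a p (N + 1))) := by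
    generalize (∏ k ∈ Finset.range N, (-(p ^ (k + 1))⁻¹)) = G at hG ⊢
    rw [mul_pow, ← div_eq_inv_mul, div_div, show a ^ N * x ^ N * G * fq (p / (a * x)) p N * fq (a * x) p N =
      (a ^ N * x ^ N * G) * (fq (a * x) p N * fq (p / (a * x)) p N) by ring,
      show a ^ N * G * fq (p / a) p N * fq a p (N + 1) * x ^ N = (a ^ N * x ^ N * G) *
        (fq a p (N + 1) * fq (p / a) p N) by ring, mul_div_mul_left]
    exact mul_ne_zero (mul_ne_zero haN hxN) hG
  rw [h1, h, Finset.mul_sum]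
  refine Finset.sum_nbij' (fun i => (i : ℤ) - N) (fun n => (n + N).toNat) ?_ ?_ ?_ ?_ ?_
  · intro i hi; simp at hi ⊢; omega
  · intro i hi; simp at hi ⊢; omega
  · intro i hi; simp
  · intro i hi; simp at hi ⊢; omega
  · intro i hi
    have hi' := Finset.mem_range.1 hi
    rw [show ((N : ℤ) + ((i : ℤ) - N)).toNat = i by omega,
      show ((N : ℤ) - ((i : ℤ) - N)).toNat = N + N - i by omega, zpow_sub₀ hp0, zpow_sub₀ hx]
    simp only [zpow_natCast]
    rw [show a * (p ^ N)⁻¹ * p ^ i = a * (p ^ i / p ^ N) by ring]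
    ring

lemma summable_kron (p x a : ℂ) (hp0 : p ≠ 0) (h1 : ‖p‖ < ‖x‖) (h2 : ‖x‖ < 1) (ha0 : a ≠ 0) :
    Summable fun n : ℤ => ‖x ^ n / (1 - a * p ^ n)‖ := by
  have hx : x ≠ 0 := norm_pos_iff.1 ((norm_nonneg _).trans_lt h1)
  have hp : Filter.Tendsto (fun n : ℕ => p ^ n) Filter.atTop (nhds 0) :=
    tendsto_pow_atTop_nhds_zero_of_norm_lt_one (h1.trans h2)
  have gen : ∀ (u : ℕ → ℂ) (l y : ℂ), ‖y‖ < 1 → Filter.Tendsto u Filter.atTop (nhds l) →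
      Summable fun n : ℕ => ‖y ^ n * u n‖ := by
    intro u l y hy hu
    obtain ⟨C, hC⟩ := (Metric.isBounded_range_of_tendsto u hu).exists_norm_le
    refine Summable.of_nonneg_of_le (fun _ => norm_nonneg _) (fun n => ?_)
      ((summable_geometric_of_lt_one (norm_nonneg y) hy).mul_right C)
    rw [norm_mul, norm_pow]
    exact mul_le_mul_of_nonneg_left (hC _ ⟨n, rfl⟩) (pow_nonneg (norm_nonneg _) _)
  refine Summable.of_nat_of_neg ?_ ?_
  · have hu : Filter.Tendsto (fun n : ℕ => (1 - a * p ^ n)⁻¹) Filter.atTop (nhds (1 - a * 0)⁻¹) :=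
      (tendsto_const_nhds.sub (tendsto_const_nhds.mul hp)).inv₀ (by simp)
    refine (gen _ _ x h2 hu).congr fun n => ?_
    simp [div_eq_mul_inv]
  · have hu : Filter.Tendsto (fun n : ℕ => (p ^ n - a)⁻¹) Filter.atTop (nhds (0 - a)⁻¹) :=
      (hp.sub tendsto_const_nhds).inv₀ (by simpa using ha0)
    have hy : ‖p / x‖ < 1 := by
      rw [norm_div]; exact (div_lt_one (norm_pos_iff.2 hx)).2 h1
    refine (gen _ _ (p / x) hy hu).congr fun n => ?_
    congr 1
    have hpn : p ^ n ≠ 0 := pow_ne_zero _ hp0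
    rw [zpow_neg, zpow_neg, zpow_natCast, zpow_natCast, div_pow,
      show 1 - a * (p ^ n)⁻¹ = (p ^ n - a) / p ^ n by field_simp, div_div_eq_mul_div,
      div_eq_mul_inv, div_eq_mul_inv]
    ring

theorem kron (p x a : ℂ) (hp0 : p ≠ 0) (h1 : ‖p‖ < ‖x‖) (h2 : ‖x‖ < 1) (ha0 : a ≠ 0)
    (ha : ∀ n : ℤ, 1 - a * p ^ n ≠ 0) :
    HasSum (fun n : ℤ => x ^ n / (1 - a * p ^ n))
      (qPoch p p ^ 2 * qPoch (a * x) p * qPoch (p / (a * x)) p /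
        (qPoch x p * qPoch (p / x) p * (qPoch a p * qPoch (p / a) p))) := by
  have hx : x ≠ 0 := norm_pos_iff.1 ((norm_nonneg _).trans_lt h1)
  have hp1 : ‖p‖ < 1 := h1.trans h2
  have hpk : ∀ k : ℕ, k ≠ 0 → p ^ k ≠ 1 := by
    intro k hk h
    have := norm_pow_lt p hp1 k hk
    rw [h, norm_one] at this; exact lt_irrefl _ this
  have hy : ‖p / x‖ < 1 := by
    rw [norm_div]; exact (div_lt_one (norm_pos_iff.2 hx)).2 h1
  have nP := qPoch_ne' p p hp1 hp1
  have nx := qPoch_ne' x p hp1 h2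
  have npx := qPoch_ne' (p / x) p hp1 hy
  have na : qPoch a p ≠ 0 := qPoch_ne a p hp1 fun n => by simpa using ha n
  have npa : qPoch (p / a) p ≠ 0 := qPoch_ne _ p hp1 fun n h => by
    have h3 := ha (-(n + 1 : ℕ))
    have hpn : p ^ (n + 1) ≠ 0 := pow_ne_zero _ hp0
    rw [zpow_neg, zpow_natCast] at h3
    apply h3
    have : p ^ (n + 1) = a := by
      have := sub_eq_zero.1 h
      field_simp at this
      rw [pow_succ', this]
    rw [this]; field_simp; ring
  have hs := summable_kron p x a hp0 h1 h2 ha0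
  have hu := (fq_tendsto (p / x) p hp1).div (fq_tendsto p p hp1) nP
  have hw := (fq_tendsto x p hp1).div (fq_tendsto p p hp1) nP
  obtain ⟨C, hC⟩ := (Metric.isBounded_range_of_tendsto _ hu).exists_norm_le
  obtain ⟨D, hD⟩ := (Metric.isBounded_range_of_tendsto _ hw).exists_norm_le
  have hC' : ∀ n, ‖fq (p / x) p n / fq p p n‖ ≤ C := fun n => hC _ ⟨n, rfl⟩
  have hD' : ∀ n, ‖fq x p n / fq p p n‖ ≤ D := fun n => hD _ ⟨n, rfl⟩
  have hC0 : 0 ≤ C := (norm_nonneg _).trans (hC' 0)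
  have hD0 : 0 ≤ D := (norm_nonneg _).trans (hD' 0)
  let F : ℕ → ℤ → ℂ := fun N n => x ^ n / (1 - a * p ^ n) *
        ((fq (p / x) p (N + n).toNat / fq p p (N + n).toNat) *
          (fq x p (N - n).toNat / fq p p (N - n).toNat))
  let K : ℂ := (qPoch (p / x) p / qPoch p p) * (qPoch x p / qPoch p p)
  have hK : K ≠ 0 := mul_ne_zero (div_ne_zero npx nP) (div_ne_zero nx nP)
  have T := tendsto_tsum_of_dominated_convergence (𝓕 := Filter.atTop)
    (f := fun (N : ℕ) (n : ℤ) => if n ∈ Finset.Icc (-N : ℤ) N then F N n else 0)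
    (g := fun n : ℤ => x ^ n / (1 - a * p ^ n) * K)
    (bound := fun n : ℤ => ‖x ^ n / (1 - a * p ^ n)‖ * (C * D))
    (hs.mul_right _) ?_ ?_
  · have T1 : Filter.Tendsto (fun N : ℕ => fq (a * x) p N * fq (p / (a * x)) p N /
        (fq a p (N + 1) * fq (p / a) p N)) Filter.atTop
        (nhds (qPoch (a * x) p * qPoch (p / (a * x)) p / (qPoch a p * qPoch (p / a) p))) :=
      ((fq_tendsto _ p hp1).mul (fq_tendsto _ p hp1)).div
        (((Filter.tendsto_add_atTop_iff_nat 1).2 (fq_tendsto a p hp1)).mul (fq_tendsto _ p hp1))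
        (mul_ne_zero na npa)
    have T2 : Filter.Tendsto (fun N : ℕ => ∑' n : ℤ,
        if n ∈ Finset.Icc (-N : ℤ) N then F N n else 0) Filter.atTop
        (nhds (qPoch (a * x) p * qPoch (p / (a * x)) p / (qPoch a p * qPoch (p / a) p))) := by
      refine T1.congr fun N => ?_
      rw [finite_kron' p x a hp0 hpk hx ha0 N ha,
        tsum_eq_sum (s := Finset.Icc (-N : ℤ) N) (fun n hn => if_neg hn)]
      exact Finset.sum_congr rfl fun n hn => (if_pos hn).symm
    have e := tendsto_nhds_unique T T2
    rw [tsum_mul_right] at e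
    have hsum := hs.of_norm.hasSum
    rw [eq_div_of_mul_eq hK e] at hsum
    have hKd : K = (qPoch (p / x) p / qPoch p p) * (qPoch x p / qPoch p p) := rfl
    have hval : qPoch p p ^ 2 * qPoch (a * x) p * qPoch (p / (a * x)) p /
        (qPoch x p * qPoch (p / x) p * (qPoch a p * qPoch (p / a) p)) =
        qPoch (a * x) p * qPoch (p / (a * x)) p / (qPoch a p * qPoch (p / a) p) / K := by
      rw [hKd]
      field_simp
    rw [hval]
    exact hsum
  · intro n
    have l1 : Filter.Tendsto (fun N : ℕ => ((N : ℤ) + n).toNat) Filter.atTop Filter.atTop := by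
      refine Filter.tendsto_atTop.2 fun b => ?_
      filter_upwards [Filter.eventually_ge_atTop (b + n.natAbs)] with N hN
      omega
    have l2 : Filter.Tendsto (fun N : ℕ => ((N : ℤ) - n).toNat) Filter.atTop Filter.atTop := by
      refine Filter.tendsto_atTop.2 fun b => ?_
      filter_upwards [Filter.eventually_ge_atTop (b + n.natAbs)] with N hN
      omega
    have l3 : Filter.Tendsto (fun N : ℕ => F N n) Filter.atTop
        (nhds (x ^ n / (1 - a * p ^ n) * K)) :=
      tendsto_const_nhds.mul ((hu.comp l1).mul (hw.comp l2))
    refine l3.congr' ?_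
    filter_upwards [Filter.eventually_ge_atTop n.natAbs] with N hN
    rw [if_pos]
    simp only [Finset.mem_Icc]; omega
  · refine Filter.Eventually.of_forall fun N n => ?_
    split_ifs
    · simp only [F]
      rw [norm_mul, norm_mul (_ / _) (_ / _)]
      exact mul_le_mul_of_nonneg_left (mul_le_mul (hC' _) (hD' _) (norm_nonneg _) hC0)
        (norm_nonneg _)
    · rw [norm_zero]; positivity

lemma hasSum_int_even_odd (f : ℤ → ℂ) (a b : ℂ) (he : HasSum (fun k : ℤ => f (2 * k)) a)
    (ho : HasSum (fun k : ℤ => f (2 * k + 1)) b) : HasSum f (a + b) := by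
  have := mul_right_injective₀ (two_ne_zero' ℤ)
  replace ho := ((add_left_injective 1).comp this).hasSum_range_iff.2 ho
  refine (this.hasSum_range_iff.2 he).add_isCompl ?_ ho
  simpa [Function.comp_def] using Int.isCompl_even_odd

lemma one_sub_zpow_ne (q : ℂ) (hq0 : 0 < ‖q‖) (hq1 : ‖q‖ < 1) (n : ℤ) (hn : n ≠ 0) :
    1 - q ^ n ≠ 0 := by
  intro h
  have h1 : ‖q‖ ^ n = 1 := by rw [← norm_zpow, ← sub_eq_zero.1 h, norm_one]
  rcases lt_or_gt_of_ne hn with h2 | h2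
  · exact absurd h1 (one_lt_zpow_of_neg₀ hq0 hq1 h2).ne'
  · exact absurd h1 (zpow_lt_one₀ hq0 hq1 h2).ne

lemma kron_pow (q : ℂ) (hq0 : 0 < ‖q‖) (hq1 : ‖q‖ < 1) (i j k : ℕ) (hi : i ≠ 0) (hik : i < k)
    (hj : ¬ k ∣ j) :
    HasSum (fun n : ℤ => q ^ ((i : ℤ) * n) / (1 - q ^ ((k : ℤ) * n + j)))
      (qPoch (q ^ k) (q ^ k) ^ 2 * qPoch (q ^ (j + i)) (q ^ k) *
        qPoch (q ^ k / q ^ (j + i)) (q ^ k) /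
        (qPoch (q ^ i) (q ^ k) * qPoch (q ^ k / q ^ i) (q ^ k) *
          (qPoch (q ^ j) (q ^ k) * qPoch (q ^ k / q ^ j) (q ^ k)))) := by
  have hq : q ≠ 0 := norm_pos_iff.1 hq0
  have e : ∀ n : ℤ, 1 - q ^ j * (q ^ k) ^ n = 1 - q ^ ((k : ℤ) * n + j) := by
    intro n
    rw [zpow_add₀ hq, zpow_mul, zpow_natCast, zpow_natCast, mul_comm]
  have h := kron (q ^ k) (q ^ i) (q ^ j) (pow_ne_zero _ hq)
    (by rw [norm_pow, norm_pow]; exact pow_lt_pow_right_of_lt_one₀ hq0 hq1 hik)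
    (norm_pow_lt q hq1 i hi) (pow_ne_zero _ hq) (by
      intro n
      rw [e]
      refine one_sub_zpow_ne q hq0 hq1 _ fun h => hj ?_
      have : (k : ℤ) ∣ (j : ℤ) := ⟨-n, by linarith⟩
      exact_mod_cast this)
  rw [← pow_add] at h
  refine h.congr_fun ?_
  intro n
  rw [e, zpow_mul, zpow_natCast]

lemma dissect (r : ℂ) (hr0 : 0 < ‖r‖) (hr1 : ‖r‖ < 1) :
    qPoch (r ^ 3) (r ^ 3) ^ 3 * qPoch (r ^ 2) (r ^ 2) ^ 2 * qPoch (r ^ 12) (r ^ 12) *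
        qPoch (r ^ 4) (r ^ 4) =
      qPoch r r * (qPoch (r ^ 4) (r ^ 4) ^ 4 * qPoch (r ^ 6) (r ^ 6) ^ 2 +
        r * qPoch (r ^ 12) (r ^ 12) ^ 4 * qPoch (r ^ 2) (r ^ 2) ^ 2) := by
  have hr : r ≠ 0 := norm_pos_iff.1 hr0
  have nn : ∀ i k : ℕ, i ≠ 0 → k ≠ 0 → qPoch (r ^ i) (r ^ k) ≠ 0 := fun i k hi hk =>
    qPoch_ne' _ _ (norm_pow_lt r hr1 k hk) (norm_pow_lt r hr1 i hi)
  have dv : ∀ i j : ℕ, r ^ (i + j) / r ^ i = r ^ j := fun i j => by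
    rw [pow_add, mul_div_cancel_left₀ _ (pow_ne_zero _ hr)]
  have S0 := kron_pow r hr0 hr1 1 1 3 (by norm_num) (by norm_num) (by norm_num)
  have S1 := kron_pow r hr0 hr1 2 2 12 (by norm_num) (by norm_num) (by norm_num)
  have S2 := kron_pow r hr0 hr1 8 2 12 (by norm_num) (by norm_num) (by norm_num)
  have S3 := kron_pow r hr0 hr1 2 4 6 (by norm_num) (by norm_num) (by norm_num)
  have z : qPoch (r ^ 6 / r ^ (4 + 2)) (r ^ 6) = 0 := by
    rw [div_self (pow_ne_zero _ hr)]; exact qPoch_one _ (norm_pow_lt r hr1 6 (by norm_num))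
  rw [z, mul_zero, zero_div] at S3
  have ev := S1.add (S2.mul_left r)
  have od := S3.mul_left r
  have tot := hasSum_int_even_odd
    (fun n : ℤ => r ^ (((1 : ℕ) : ℤ) * n) / (1 - r ^ (((3 : ℕ) : ℤ) * n + ((1 : ℕ) : ℤ)))) _ _
    (ev.congr_fun fun n => ?_) (od.congr_fun fun n => ?_)
  · have key := S0.unique tot
    rw [mul_zero, add_zero] at key
    norm_num only at key
    rw [dv 2 1, dv 1 2, dv 4 8, dv 2 10, dv 10 2, dv 8 4] at key
    have f1 : qPoch r r = qPoch (r ^ 1) (r ^ 3) * qPoch (r ^ 2) (r ^ 3) * qPoch (r ^ 3) (r ^ 3) := by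
      rw [qPoch_three r r hr1]; ring_nf
    have f4 : qPoch (r ^ 4) (r ^ 4) =
        qPoch (r ^ 4) (r ^ 12) * qPoch (r ^ 8) (r ^ 12) * qPoch (r ^ 12) (r ^ 12) := by
      rw [qPoch_three _ _ (norm_pow_lt r hr1 4 (by norm_num))]; ring_nf
    have f2 : qPoch (r ^ 2) (r ^ 2) =
        qPoch (r ^ 2) (r ^ 12) * qPoch (r ^ 6) (r ^ 12) * qPoch (r ^ 10) (r ^ 12) *
          qPoch (r ^ 4) (r ^ 4) := by
      rw [qPoch_two (r ^ 2) _ (norm_pow_lt r hr1 2 (by norm_num)), ← pow_mul, ← pow_add]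
      norm_num only
      rw [qPoch_three (r ^ 2) _ (norm_pow_lt r hr1 4 (by norm_num))]; ring_nf
    have f6 : qPoch (r ^ 6) (r ^ 6) = qPoch (r ^ 6) (r ^ 12) * qPoch (r ^ 12) (r ^ 12) := by
      rw [qPoch_two (r ^ 6) _ (norm_pow_lt r hr1 6 (by norm_num))]; ring_nf
    have n1 := nn 1 3 (by norm_num) (by norm_num)
    have n2 := nn 2 3 (by norm_num) (by norm_num)
    have n3 := nn 3 3 (by norm_num) (by norm_num)
    have m2 := nn 2 12 (by norm_num) (by norm_num)
    have m4 := nn 4 12 (by norm_num) (by norm_num)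
    have m6 := nn 6 12 (by norm_num) (by norm_num)
    have m8 := nn 8 12 (by norm_num) (by norm_num)
    have m10 := nn 10 12 (by norm_num) (by norm_num)
    have m12 := nn 12 12 (by norm_num) (by norm_num)
    rw [f2, f6, f4, f1]
    generalize qPoch (r ^ 1) (r ^ 3) = a1 at *
    generalize qPoch (r ^ 2) (r ^ 3) = a2 at *
    generalize qPoch (r ^ 3) (r ^ 3) = a3 at *
    generalize qPoch (r ^ 2) (r ^ 12) = b2 at *
    generalize qPoch (r ^ 4) (r ^ 12) = b4 at *
    generalize qPoch (r ^ 6) (r ^ 12) = b6 at *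
    generalize qPoch (r ^ 8) (r ^ 12) = b8 at *
    generalize qPoch (r ^ 10) (r ^ 12) = b10 at *
    generalize qPoch (r ^ 12) (r ^ 12) = b12 at *
    have k1 : a3 ^ 2 = a1 * a2 * (b12 ^ 2 * b4 * b8 / (b2 * b10) ^ 2 +
        r * (b12 ^ 2 / (b4 * b8))) := by
      have e1 : a3 ^ 2 * a2 * a1 / (a1 * a2 * (a1 * a2)) = a3 ^ 2 / (a1 * a2) := by field_simp
      have e2 : b12 ^ 2 * b10 * b2 / (b8 * b4 * (b2 * b10)) = b12 ^ 2 / (b4 * b8) := by field_simp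
      have e3 : b12 ^ 2 * b4 * b8 / (b2 * b10 * (b2 * b10)) = b12 ^ 2 * b4 * b8 / (b2 * b10) ^ 2 := by
        field_simp
      rw [e1, e2, e3] at key
      rw [← key]; field_simp
    have k2 : a3 ^ 3 = a1 * a2 * a3 * (b12 ^ 2 * b4 * b8 / (b2 * b10) ^ 2 +
        r * (b12 ^ 2 / (b4 * b8))) := by
      rw [pow_succ, k1]; ring
    rw [k2]
    field_simp
  · have hw := one_sub_zpow_ne r hr0 hr1 (6 * n + 1) (by omega)
    have hw2 := one_sub_zpow_ne r hr0 hr1 (12 * n + 2) (by omega)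
    have e1 : r ^ (12 * n + 2) = r ^ (6 * n + 1) * r ^ (6 * n + 1) := by
      rw [← zpow_add₀ hr]; congr 1; ring
    have e2 : r * r ^ (8 * n) = r ^ (2 * n) * r ^ (6 * n + 1) := by
      rw [← zpow_one_add₀ hr, ← zpow_add₀ hr]; congr 1; ring
    push_cast
    rw [show (1 : ℤ) * (2 * n) = 2 * n by ring, show (3 : ℤ) * (2 * n) + 1 = 6 * n + 1 by ring,
      ← mul_div_assoc, e2]
    rw [e1] at hw2 ⊢
    generalize r ^ (6 * n + 1) = w at hw hw2 ⊢
    rw [← add_div, div_eq_div_iff hw hw2]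
    ring
  · push_cast
    rw [show (1 : ℤ) * (2 * n + 1) = 2 * n + 1 by ring,
      show (3 : ℤ) * (2 * n + 1) + 1 = 6 * n + 4 by ring, zpow_add_one₀ hr]
    ring

lemma qPoch_neg (q : ℂ) (hq : ‖q‖ < 1) :
    qPoch (-q) (-q) * qPoch q q * qPoch (q ^ 4) (q ^ 4) = qPoch (q ^ 2) (q ^ 2) ^ 3 := by
  have h2 := norm_pow_lt q hq 2 (by norm_num)
  have h1 := qPoch_two q q hq
  have h3 := qPoch_two (-q) (-q) (by rwa [norm_neg])
  have h4 := qPoch_sq q (q ^ 2) h2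
  have h5 := qPoch_two (q ^ 2) (q ^ 2) h2
  rw [show q * q = q ^ 2 by ring] at h1
  rw [show -q * -q = q ^ 2 by ring, show (-q) ^ 2 = q ^ 2 by ring] at h3
  rw [show (q ^ 2) ^ 2 = q ^ 4 by ring] at h4 h5
  rw [show q ^ 2 * q ^ 2 = q ^ 4 by ring] at h5
  rw [h1, h3]
  calc _ = (qPoch q (q ^ 2) * qPoch (-q) (q ^ 2)) * qPoch (q ^ 4) (q ^ 4) *
        qPoch (q ^ 2) (q ^ 2) ^ 2 := by ring
    _ = _ := by rw [h4, ← h5]; ring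

theorem q_div_c_two_dissection (q : ℂ) (hq0 : 0 < ‖q‖) (hq1 : ‖q‖ < 1) :
    q / c q =
      -(q ^ 2) * c (q ^ 4) ^ 2 / c (q ^ 2) ^ 3 +
        3 * q * qPoch (q ^ 4) (q ^ 4) ^ 2 * qPoch (q ^ 12) (q ^ 12) ^ 2 /
          (c (q ^ 2) ^ 2 * qPoch (q ^ 2) (q ^ 2) * qPoch (q ^ 6) (q ^ 6)) := by
  have nn : ∀ k : ℕ, k ≠ 0 → qPoch (q ^ k) (q ^ k) ≠ 0 := fun k hk =>
    qPoch_ne' _ _ (norm_pow_lt q hq1 k hk) (norm_pow_lt q hq1 k hk)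
  have hD := dissect (-q) (by rwa [norm_neg]) (by rwa [norm_neg])
  have hA := qPoch_neg q hq1
  have hB := qPoch_neg (q ^ 3) (norm_pow_lt q hq1 3 (by norm_num))
  rw [show (-q) ^ 3 = -q ^ 3 by ring, show (-q) ^ 2 = q ^ 2 by ring,
    show (-q) ^ 4 = q ^ 4 by ring, show (-q) ^ 6 = q ^ 6 by ring,
    show (-q) ^ 12 = q ^ 12 by ring] at hD
  simp only [← pow_mul] at hB
  simp only [c, ← pow_mul]
  norm_num only at hB ⊢
  have n1 : qPoch q q ≠ 0 := by simpa using nn 1 (by norm_num)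
  have n2 := nn 2 (by norm_num)
  have n3 := nn 3 (by norm_num)
  have n4 := nn 4 (by norm_num)
  have n6 := nn 6 (by norm_num)
  have n12 := nn 12 (by norm_num)
  generalize qPoch (-q) (-q) = X1 at *
  generalize qPoch (-q ^ 3) (-q ^ 3) = X3 at *
  generalize qPoch q q = e1 at *
  generalize qPoch (q ^ 2) (q ^ 2) = e2 at *
  generalize qPoch (q ^ 3) (q ^ 3) = e3 at *
  generalize qPoch (q ^ 4) (q ^ 4) = e4 at *
  generalize qPoch (q ^ 6) (q ^ 6) = e6 at *
  generalize qPoch (q ^ 12) (q ^ 12) = e12 at *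
  have hX1 : X1 = e2 ^ 3 / (e1 * e4) := by rw [eq_div_iff (by simp [*]), ← hA]; ring
  have hX3 : X3 = e6 ^ 3 / (e3 * e12) := by rw [eq_div_iff (by simp [*]), ← hB]; ring
  subst hX1 hX3
  have key : e1 * e4 ^ 2 * e6 ^ 9 =
      e2 * e3 ^ 3 * e12 ^ 2 * (e4 ^ 4 * e6 ^ 2 - q * e12 ^ 4 * e2 ^ 2) := by
    clear hA hB
    field_simp at hD
    linear_combination hD
  field_simp
  linear_combination q * key
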